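/- arXiv:1906.03851 — 5 statements merged into one kernel-verified Lean document; each statement's English description precedes it below -/
import Mathlib

section
/- (Proposition 2.1.) Let F be the logistic function, θ ∈ ℝ and δ_1,…,δ_k ∈ ℝ. Let μ be a probability measure on {0,1}^k concentrated on the Guttman space Ω^G whose coordinate marginals satisfy μ(Y^{(r)} = 1) = F(θ − δ_r) for all r = 1,…,k. Then necessarily F(θ − δ_r) ≥ F(θ − δ_s) whenever r < s (equivalently δ_r ≤ δ_s for r < s), and the sum Y = Y^{(1)} + … + Y^{(k)} follows the cumulative model: μ(Y ≥ r) = F(θ − δ_r) for all r = 1,…,k. Conversely, if F(θ − δ_r) ≥ F(θ − δ_s) for all r < s, then such a probability measure μ on Ω^G with these marginals exists. -/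
open scoped Classical

/-- The logistic function `F(x) = exp x / (1 + exp x)`. -/
noncomputable def logistic (x : ℝ) : ℝ := Real.exp x / (1 + Real.exp x)

/-- A vector in `{0,1}^k` is a Guttman vector if its coordinates are nonincreasing,
i.e. it has the form `(1,…,1,0,…,0)`. -/
def IsGuttman {k : ℕ} (y : Fin k → Bool) : Prop :=
  ∀ i j : Fin k, i ≤ j → y j = true → y i = true

/-- The sum `Y = Y⁽¹⁾ + … + Y⁽ᵏ⁾` of the binary coordinates. -/
def gsum {k : ℕ} (y : Fin k → Bool) : ℕ :=
  ∑ i : Fin k, if y i then 1 else 0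

/-!
On a Guttman vector the `r`-th coordinate is `1` exactly when at least `r` coordinates are, so under
a measure concentrated on Guttman vectors the marginals and the tail probabilities of the sum score
are the same numbers, and tail probabilities decrease. Conversely, a decreasing sequence of
marginals in `[0, 1]`, preceded by `1` and followed by `0`, is the tail function of a distribution
on `{0, …, k}`; its image under `n ↦ (1, …, 1, 0, …, 0)`, with `n` ones, has the prescribed
marginals.
-/

open Finset

theorem logistic_mem_Icc (x : ℝ) : logistic x ∈ Set.Icc 0 1 := by
  unfold logistic
  refine ⟨by positivity, ?_⟩
  rw [div_le_one (by positivity)]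
  exact le_add_of_nonneg_left zero_le_one

section SumScore

variable {k : ℕ} {y : Fin k → Bool}

theorem gsum_eq_card (y : Fin k → Bool) : gsum y = #{i | y i = true} := by
  simp [gsum]

theorem IsGuttman.lt_gsum_iff (hy : IsGuttman y) (i : Fin k) : (i : ℕ) < gsum y ↔ y i = true := by
  rw [gsum_eq_card]
  constructor
  · contrapose!
    intro hi
    have ones_subset : ({j | y j = true} : Finset (Fin k)) ⊆ Iio i := fun j hj =>
      mem_Iio.2 <| not_le.1 fun hij => hi (hy i j hij (by simpa using hj))
    simpa using card_le_card ones_subset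
  · intro hi
    have subset_ones : Iic i ⊆ ({j | y j = true} : Finset (Fin k)) := fun j hj => by
      simpa using hy j i (mem_Iic.1 hj) hi
    simpa using card_le_card subset_ones

end SumScore

section Concentrated

variable {M : Type*} [AddCommMonoid M] {k : ℕ} {μ : (Fin k → Bool) → M}

theorem sum_filter_and_isGuttman (hμ : ∀ y, ¬ IsGuttman y → μ y = 0)
    (P : (Fin k → Bool) → Prop) [DecidablePred P] :
    ∑ y with P y ∧ IsGuttman y, μ y = ∑ y with P y, μ y := by
  rw [← filter_filter]
  exact sum_filter_of_ne fun y _ hy => not_imp_comm.1 (hμ y) hy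

theorem sum_filter_lt_gsum_eq_marginal (hμ : ∀ y, ¬ IsGuttman y → μ y = 0) (i : Fin k) :
    ∑ y with (i : ℕ) < gsum y, μ y = ∑ y with y i = true, μ y :=
  calc
    ∑ y with (i : ℕ) < gsum y, μ y = ∑ y with (i : ℕ) < gsum y ∧ IsGuttman y, μ y :=
      (sum_filter_and_isGuttman hμ _).symm
    _ = ∑ y with y i = true ∧ IsGuttman y, μ y :=
      congrArg (Finset.sum · μ) <| filter_congr fun _ _ =>
        and_congr_left fun hy => hy.lt_gsum_iff i
    _ = ∑ y with y i = true, μ y := sum_filter_and_isGuttman hμ _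

theorem antitone_marginal [PartialOrder M] [IsOrderedAddMonoid M] (h₀ : ∀ y, 0 ≤ μ y)
    (hμ : ∀ y, ¬ IsGuttman y → μ y = 0) :
    Antitone fun i : Fin k => ∑ y with y i = true, μ y := fun i j hij =>
  calc
    ∑ y with y j = true, μ y = ∑ y with y j = true ∧ IsGuttman y, μ y :=
      (sum_filter_and_isGuttman hμ _).symm
    _ ≤ ∑ y with y i = true, μ y :=
      sum_le_sum_of_subset_of_nonneg
        (monotone_filter_right _ fun _ _ hy => hy.2 i j hij hy.1) fun y _ _ => h₀ y

end Concentrated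

section Pushforward

/-- The Guttman vector `(1, …, 1, 0, …, 0)` of length `k` with `n` ones, or the all-ones vector if
`k ≤ n`. It is the only point of the Guttman space with sum score `n ≤ k`. -/
def guttmanVector (k n : ℕ) : Fin k → Bool := fun i => decide ((i : ℕ) < n)

theorem guttmanVector_apply_eq_true {k n : ℕ} {i : Fin k} :
    guttmanVector k n i = true ↔ (i : ℕ) < n :=
  decide_eq_true_iff

theorem isGuttman_guttmanVector (k n : ℕ) : IsGuttman (guttmanVector k n) := by
  intro i j hij
  simp only [guttmanVector_apply_eq_true]
  exact lt_of_le_of_lt hij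

variable {M : Type*} [AddCommMonoid M] (k : ℕ) (w : ℕ → M)

/-- The measure on `{0,1}^k` whose sum score has mass `w n` at each `n ≤ k`: the image of `w`,
restricted to `{0, …, k}`, under `guttmanVector k`. -/
noncomputable def guttmanMass (y : Fin k → Bool) : M :=
  ∑ n ∈ range (k + 1) with guttmanVector k n = y, w n

theorem sum_filter_guttmanMass (P : (Fin k → Bool) → Prop) [DecidablePred P] :
    ∑ y with P y, guttmanMass k w y = ∑ n ∈ range (k + 1) with P (guttmanVector k n), w n := by
  simp [guttmanMass, sum_fiberwise_eq_sum_filter]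

theorem sum_guttmanMass : ∑ y, guttmanMass k w y = ∑ n ∈ range (k + 1), w n := by
  simpa using sum_filter_guttmanMass k w fun _ => True

theorem marginal_guttmanMass (i : Fin k) :
    ∑ y with y i = true, guttmanMass k w y = ∑ n ∈ Ico ((i : ℕ) + 1) (k + 1), w n := by
  rw [sum_filter_guttmanMass]
  refine sum_congr ?_ fun _ _ => rfl
  ext n
  simp only [mem_filter, mem_range, guttmanVector_apply_eq_true, mem_Ico]
  omega

variable {k w}

theorem guttmanMass_eq_zero_of_not_isGuttman {y : Fin k → Bool} (hy : ¬ IsGuttman y) :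
    guttmanMass k w y = 0 := by
  rw [guttmanMass, filter_false_of_mem, sum_empty]
  rintro n - rfl
  exact hy (isGuttman_guttmanVector k n)

theorem guttmanMass_nonneg [PartialOrder M] [IsOrderedAddMonoid M] (hw : ∀ n, 0 ≤ w n)
    (y : Fin k → Bool) : 0 ≤ guttmanMass k w y :=
  sum_nonneg fun n _ => hw n

end Pushforward

section ScoreTail

variable {M : Type*} {k : ℕ}

/-- The tail function `r ↦ μ(Y ≥ r)` of the sum score of a measure of total mass `t` on the Guttman
space with marginals `p`. Marginals are indexed from `0`, hence the shift, and the tail vanishes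
beyond `k`. -/
def scoreTail [Zero M] (t : M) (p : Fin k → M) : ℕ → M
  | 0 => t
  | n + 1 => if h : n < k then p ⟨n, h⟩ else 0

theorem scoreTail_zero [Zero M] (t : M) (p : Fin k → M) : scoreTail t p 0 = t := rfl

theorem scoreTail_val_succ [Zero M] (t : M) (p : Fin k → M) (i : Fin k) :
    scoreTail t p (i + 1) = p i := by
  simp [scoreTail]

theorem scoreTail_length_succ [Zero M] (t : M) (p : Fin k → M) : scoreTail t p (k + 1) = 0 := by
  simp [scoreTail]

theorem antitone_scoreTail [Zero M] [Preorder M] {t : M} {p : Fin k → M} (ht : 0 ≤ t)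
    (hp : ∀ i, p i ∈ Set.Icc 0 t) (hanti : Antitone p) : Antitone (scoreTail t p) := by
  refine antitone_nat_of_succ_le fun n => ?_
  cases n with
  | zero =>
    simp only [scoreTail]
    split_ifs with hk
    exacts [(hp _).2, ht]
  | succ n =>
    simp only [scoreTail]
    split_ifs with hn₁ hn
    · exact hanti (Fin.mk_le_mk.2 n.le_succ)
    · omega
    · exact (hp _).1
    · exact le_rfl

theorem exists_guttman_mass_of_antitone [AddCommGroup M] [PartialOrder M] [IsOrderedAddMonoid M]
    {t : M} {p : Fin k → M} (ht : 0 ≤ t) (hp : ∀ i, p i ∈ Set.Icc 0 t) (hanti : Antitone p) :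
    ∃ μ : (Fin k → Bool) → M,
      (∀ y, 0 ≤ μ y) ∧ (∑ y, μ y = t) ∧ (∀ y, ¬ IsGuttman y → μ y = 0) ∧
      (∀ i, ∑ y with y i = true, μ y = p i) := by
  refine ⟨guttmanMass k fun n => scoreTail t p n - scoreTail t p (n + 1), ?_, ?_, ?_, fun i => ?_⟩
  · exact guttmanMass_nonneg fun n => sub_nonneg.2 (antitone_scoreTail ht hp hanti n.le_succ)
  · rw [sum_guttmanMass, sum_range_sub', scoreTail_zero, scoreTail_length_succ, sub_zero]
  · exact fun y => guttmanMass_eq_zero_of_not_isGuttman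
  · rw [marginal_guttmanMass, sum_Ico_eq_sub _ (by omega), sum_range_sub', sum_range_sub',
      sub_sub_sub_cancel_left, scoreTail_val_succ, scoreTail_length_succ, sub_zero]

end ScoreTail

theorem cumulative_model_iff_guttman_marginals_general {M : Type*} [AddCommGroup M]
    [PartialOrder M] [IsOrderedAddMonoid M] {k : ℕ} (t : M) (p : Fin k → M) :
    (∀ μ : (Fin k → Bool) → M,
      (∀ y, 0 ≤ μ y) →
      (∀ y, ¬ IsGuttman y → μ y = 0) →
      (∀ i, ∑ y with y i = true, μ y = p i) →
      (∀ i j, i < j → p j ≤ p i) ∧ ∀ i : Fin k, ∑ y with (i : ℕ) + 1 ≤ gsum y, μ y = p i) ∧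
    (0 ≤ t → (∀ i, p i ∈ Set.Icc 0 t) → (∀ i j, i < j → p j ≤ p i) →
      ∃ μ : (Fin k → Bool) → M,
        (∀ y, 0 ≤ μ y) ∧ (∑ y, μ y = t) ∧
        (∀ y, ¬ IsGuttman y → μ y = 0) ∧
        (∀ i, ∑ y with y i = true, μ y = p i)) := by
  constructor
  · intro μ h₀ hμ hp
    obtain rfl : (fun i => ∑ y with y i = true, μ y) = p := funext hp
    exact ⟨fun i j hij => antitone_marginal h₀ hμ hij.le, sum_filter_lt_gsum_eq_marginal hμ⟩
  · intro ht hp hle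
    exact exists_guttman_mass_of_antitone ht hp (antitone_iff_forall_lt.2 fun i j => hle i j)

/-- Proposition 2.1: if a probability measure `μ` on `{0,1}^k` is
concentrated on the Guttman space and its coordinate marginals are
`μ(Y⁽ʳ⁾ = 1) = F(θ - δ r)`, then necessarily `F(θ - δ r) ≥ F(θ - δ s)` for `r < s`
and the sum `Y` follows the cumulative model `μ(Y ≥ r) = F(θ - δ r)`.
Conversely, if `F(θ - δ r) ≥ F(θ - δ s)` for all `r < s`, such a `μ` exists.
(Here `r = i + 1` for `i : Fin k`.) -/
theorem cumulative_model_iff_guttman_marginals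
    (k : ℕ) (θ : ℝ) (δ : Fin k → ℝ) :
    (∀ μ : (Fin k → Bool) → ℝ,
      (∀ y, 0 ≤ μ y) → (∑ y, μ y = 1) →
      (∀ y, ¬ IsGuttman y → μ y = 0) →
      (∀ i : Fin k,
        ∑ y ∈ Finset.univ.filter (fun y : Fin k → Bool => y i = true), μ y
          = logistic (θ - δ i)) →
      ((∀ i j : Fin k, i < j → logistic (θ - δ j) ≤ logistic (θ - δ i)) ∧
        (∀ i : Fin k,
          ∑ y ∈ Finset.univ.filter (fun y : Fin k → Bool => (i : ℕ) + 1 ≤ gsum y), μ y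
            = logistic (θ - δ i)))) ∧
    ((∀ i j : Fin k, i < j → logistic (θ - δ j) ≤ logistic (θ - δ i)) →
      ∃ μ : (Fin k → Bool) → ℝ,
        (∀ y, 0 ≤ μ y) ∧ (∑ y, μ y = 1) ∧
        (∀ y, ¬ IsGuttman y → μ y = 0) ∧
        (∀ i : Fin k,
          ∑ y ∈ Finset.univ.filter (fun y : Fin k → Bool => y i = true), μ y
            = logistic (θ - δ i))) := by
  obtain ⟨necessity, existence⟩ :=
    cumulative_model_iff_guttman_marginals_general 1 fun i => logistic (θ - δ i)
  exact ⟨fun μ h₀ _ => necessity μ h₀, existence zero_le_one fun _ => logistic_mem_Icc _⟩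
end

section
/- (Proposition 4.2.) Let k = 2, let F be the logistic function, θ, δ_1, δ_2 ∈ ℝ. Let μ̃ be the product measure on {0,1}² with independent Bernoulli coordinates of success probabilities F(θ − δ_1) and F(θ − δ_2), and let μ be μ̃ conditioned on the Guttman space Ω^G = {(1,1),(1,0),(0,0)}. Then the coordinate projections Y^{(1)}, Y^{(2)} under μ satisfy the conditional Rasch models μ(Y^{(2)} = 1 | Y^{(1)} = 1) = F(θ − δ_2) and μ(Y^{(1)} = 1 | Y^{(2)} = 0) = F(θ − δ_1). -/
open scoped Classical

/-- The product (independent Bernoulli) probability mass function on `{0,1}²`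
with success probabilities `F(θ - δ₁)` and `F(θ - δ₂)`. -/
noncomputable def prodBer2 (θ δ₁ δ₂ : ℝ) (y : Bool × Bool) : ℝ :=
  (if y.1 then logistic (θ - δ₁) else 1 - logistic (θ - δ₁)) *
    (if y.2 then logistic (θ - δ₂) else 1 - logistic (θ - δ₂))

/-- The Guttman space `Ω^G = {(1,1), (1,0), (0,0)} ⊆ {0,1}²`. -/
def guttman2 : Finset (Bool × Bool) := {(true, true), (true, false), (false, false)}

/-!
Both conditioning events `{Y⁽¹⁾ = 1}` and `{Y⁽²⁾ = 0}` lie inside the Guttman space, so conditioning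
on the Guttman space first does not affect these conditional probabilities. Under the product
measure they equal the marginal ones by independence.
-/

section ConditionedMass

variable {α K : Type*} [DecidableEq α] [Field K]

/-- The mass function obtained from a weight `w` by conditioning on the event `A`. The weight need
not be normalised; if its total over `A` vanishes, then so does the conditioned mass. -/
def conditionedMass (w : α → K) (A : Finset α) (y : α) : K :=
  (if y ∈ A then w y else 0) / ∑ z ∈ A, w z

theorem sum_conditionedMass_of_subset (w : α → K) {A s : Finset α} (hsA : s ⊆ A) :
    ∑ y ∈ s, conditionedMass w A y = (∑ y ∈ s, w y) / ∑ z ∈ A, w z := by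
  simp only [conditionedMass, ← Finset.sum_div, Finset.sum_ite_mem, Finset.inter_eq_left.mpr hsA]

theorem sum_conditionedMass_div_sum_conditionedMass {w : α → K} {A s t : Finset α}
    (hA : ∑ z ∈ A, w z ≠ 0) (hts : t ⊆ s) (hsA : s ⊆ A) :
    (∑ y ∈ t, conditionedMass w A y) / ∑ y ∈ s, conditionedMass w A y =
      (∑ y ∈ t, w y) / ∑ y ∈ s, w y := by
  rw [sum_conditionedMass_of_subset w (hts.trans hsA), sum_conditionedMass_of_subset w hsA,
    div_div_div_cancel_right₀ hA]

end ConditionedMass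

section ProductMass

variable {α β K : Type*} [Field K] {f : α → K} {g : β → K}

theorem sum_product_div_sum_product_univ [Fintype β] {s : Finset α} (hf : ∑ a ∈ s, f a ≠ 0)
    (hg : ∑ b, g b = 1) (t : Finset β) :
    (∑ y ∈ s ×ˢ t, f y.1 * g y.2) / ∑ y ∈ s ×ˢ Finset.univ, f y.1 * g y.2 = ∑ b ∈ t, g b := by
  simp only [Finset.sum_product, ← Finset.sum_mul_sum, hg, mul_one, mul_div_cancel_left₀ _ hf]

theorem sum_product_div_sum_univ_product [Fintype α] {t : Finset β} (hf : ∑ a, f a = 1)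
    (hg : ∑ b ∈ t, g b ≠ 0) (s : Finset α) :
    (∑ y ∈ s ×ˢ t, f y.1 * g y.2) / ∑ y ∈ Finset.univ ×ˢ t, f y.1 * g y.2 = ∑ a ∈ s, f a := by
  simp only [Finset.sum_product, ← Finset.sum_mul_sum, hf, one_mul, mul_div_cancel_right₀ _ hg]

end ProductMass

section Bernoulli

variable {R : Type*} [Ring R]

/-- The mass function on `Bool` of the Bernoulli distribution with success probability `p`, where
`true` is success. It is defined for every `p` in a ring, without requiring `0 ≤ p ≤ 1`. -/
def bernoulliMass (p : R) (b : Bool) : R := if b then p else 1 - p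

theorem sum_bernoulliMass (p : R) : ∑ b, bernoulliMass p b = 1 := by
  simp [bernoulliMass]

theorem bernoulliMass_pos [PartialOrder R] [IsOrderedAddMonoid R] {p : R}
    (hp₀ : 0 < p) (hp₁ : p < 1) : ∀ b, 0 < bernoulliMass p b
  | true => hp₀
  | false => sub_pos.mpr hp₁

end Bernoulli

theorem logistic_eq_sigmoid (x : ℝ) : logistic x = Real.sigmoid x := by
  rw [logistic, Real.sigmoid_def, Real.exp_neg]
  field_simp
  ring

theorem bernoulliMass_logistic_pos (x : ℝ) (b : Bool) : 0 < bernoulliMass (logistic x) b := by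
  rw [logistic_eq_sigmoid]
  exact bernoulliMass_pos (Real.sigmoid_pos x) (Real.sigmoid_lt_one x) b

theorem fst_true_subset_guttman2 : {true} ×ˢ Finset.univ ⊆ guttman2 := by decide

theorem snd_false_subset_guttman2 : Finset.univ ×ˢ {false} ⊆ guttman2 := by decide

theorem prodBer2_eq_mul (θ δ₁ δ₂ : ℝ) (y : Bool × Bool) :
    prodBer2 θ δ₁ δ₂ y =
      bernoulliMass (logistic (θ - δ₁)) y.1 * bernoulliMass (logistic (θ - δ₂)) y.2 :=
  rfl

theorem sum_prodBer2_guttman2_pos (θ δ₁ δ₂ : ℝ) : 0 < ∑ z ∈ guttman2, prodBer2 θ δ₁ δ₂ z :=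
  Finset.sum_pos
    (fun _ _ => mul_pos (bernoulliMass_logistic_pos _ _) (bernoulliMass_logistic_pos _ _))
    (Finset.insert_nonempty _ _)

theorem prodBer2_snd_true_given_fst_true (θ δ₁ δ₂ : ℝ) :
    (∑ y ∈ {true} ×ˢ {true}, prodBer2 θ δ₁ δ₂ y) /
        ∑ y ∈ {true} ×ˢ Finset.univ, prodBer2 θ δ₁ δ₂ y = logistic (θ - δ₂) := by
  have h_fst : ∑ a ∈ {true}, bernoulliMass (logistic (θ - δ₁)) a ≠ 0 := by
    rw [Finset.sum_singleton]
    exact (bernoulliMass_logistic_pos _ _).ne'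
  simp only [prodBer2_eq_mul]
  rw [sum_product_div_sum_product_univ h_fst (sum_bernoulliMass _), Finset.sum_singleton]
  rfl

theorem prodBer2_fst_true_given_snd_false (θ δ₁ δ₂ : ℝ) :
    (∑ y ∈ {true} ×ˢ {false}, prodBer2 θ δ₁ δ₂ y) /
        ∑ y ∈ Finset.univ ×ˢ {false}, prodBer2 θ δ₁ δ₂ y = logistic (θ - δ₁) := by
  have h_snd : ∑ b ∈ {false}, bernoulliMass (logistic (θ - δ₂)) b ≠ 0 := by
    rw [Finset.sum_singleton]
    exact (bernoulliMass_logistic_pos _ _).ne'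
  simp only [prodBer2_eq_mul]
  rw [sum_product_div_sum_univ_product (sum_bernoulliMass _) h_snd, Finset.sum_singleton]
  rfl

/-- Proposition 4.2: for `μ` the product Bernoulli measure with success
probabilities `F(θ - δ₁)`, `F(θ - δ₂)` conditioned on the Guttman space,
`μ(Y⁽²⁾ = 1 | Y⁽¹⁾ = 1) = F(θ - δ₂)` and `μ(Y⁽¹⁾ = 1 | Y⁽²⁾ = 0) = F(θ - δ₁)`. -/
theorem conditional_rasch_in_conditioned_guttman_two_items
    (θ δ₁ δ₂ : ℝ) (μ : Bool × Bool → ℝ)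
    (hμ : ∀ y, μ y = (if y ∈ guttman2 then prodBer2 θ δ₁ δ₂ y else 0) /
        ∑ z ∈ guttman2, prodBer2 θ δ₁ δ₂ z) :
    (∑ y ∈ Finset.univ.filter (fun y : Bool × Bool => y.2 = true ∧ y.1 = true), μ y) /
        (∑ y ∈ Finset.univ.filter (fun y : Bool × Bool => y.1 = true), μ y)
      = logistic (θ - δ₂) ∧
    (∑ y ∈ Finset.univ.filter (fun y : Bool × Bool => y.1 = true ∧ y.2 = false), μ y) /
        (∑ y ∈ Finset.univ.filter (fun y : Bool × Bool => y.2 = false), μ y)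
      = logistic (θ - δ₁) := by
  obtain rfl : μ = conditionedMass (prodBer2 θ δ₁ δ₂) guttman2 := funext hμ
  have h_total := (sum_prodBer2_guttman2_pos θ δ₁ δ₂).ne'
  have h_fst_true : Finset.univ.filter (fun y : Bool × Bool => y.1 = true) =
      ({true} : Finset Bool) ×ˢ Finset.univ := by decide
  have h_snd_false : Finset.univ.filter (fun y : Bool × Bool => y.2 = false) =
      Finset.univ ×ˢ ({false} : Finset Bool) := by decide
  have h_true_true : Finset.univ.filter (fun y : Bool × Bool => y.2 = true ∧ y.1 = true) =
      ({true} : Finset Bool) ×ˢ {true} := by decide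
  have h_true_false : Finset.univ.filter (fun y : Bool × Bool => y.1 = true ∧ y.2 = false) =
      ({true} : Finset Bool) ×ˢ {false} := by decide
  rw [h_fst_true, h_snd_false, h_true_true, h_true_false]
  constructor
  · rw [sum_conditionedMass_div_sum_conditionedMass h_total
      (Finset.product_subset_product_right (Finset.subset_univ _)) fst_true_subset_guttman2]
    exact prodBer2_snd_true_given_fst_true θ δ₁ δ₂
  · rw [sum_conditionedMass_div_sum_conditionedMass h_total
      (Finset.product_subset_product_left (Finset.subset_univ _)) snd_false_subset_guttman2]
    exact prodBer2_fst_true_given_snd_false θ δ₁ δ₂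
end

section
/- (Proposition 4.4.) Let F be the logistic function and let p be a probability mass function on {0,1,…,k} following the partial credit model with parameters θ, δ_1,…,δ_k. Let G : {0,…,k} → {0,1}^k be the Guttman embedding G(y) = (1{y ≥ 1},…,1{y ≥ k}), and let μ be the pushforward of p under G (a measure concentrated on the Guttman space). Then, with the conventions G_0 ≡ 1 and G_{k+1} ≡ 0, for every r = 1,…,k the conditioning event has positive probability and μ(G_r = 1 | G_{r−1} = 1, G_{r+1} = 0) = F(θ − δ_r). -/
open scoped Classical

/-- The probability mass function of the partial credit model (PCM) with person
parameter `θ` and item parameters `δ 1, …, δ k`. -/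
noncomputable def pcmPMF (k : ℕ) (θ : ℝ) (δ : ℕ → ℝ) (r : ℕ) : ℝ :=
  Real.exp (∑ l ∈ Finset.Icc 1 r, (θ - δ l)) /
    ∑ s ∈ Finset.range (k + 1), Real.exp (∑ l ∈ Finset.Icc 1 s, (θ - δ l))

/-- The `r`-th coordinate of the Guttman embedding `G(y) = (1{y ≥ 1},…,1{y ≥ k})`
of `y ∈ {0,…,k}`, with the conventions `G_0 ≡ 1` and `G_r ≡ 0` for `r > k`. -/
def gcoord (k y r : ℕ) : Bool :=
  if 1 ≤ r ∧ r ≤ k then decide (r ≤ y) else decide (r = 0)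

/-!
A Guttman vector with `G_{r-1} = 1` and `G_{r+1} = 0` is the image of `r - 1` or of `r`, so the
conditional probability is `p r / (p (r - 1) + p r)`. Under the PCM the ratio of the two masses is
`exp (θ - δ r)`: the normalizing constant cancels and what remains is the logistic function.
-/

lemma logistic_eq_mul_exp_div_add {a : ℝ} (ha : a ≠ 0) (x : ℝ) :
    logistic x = a * Real.exp x / (a + a * Real.exp x) := by
  rw [logistic, ← mul_one_add, mul_div_mul_left _ _ ha]

lemma pcmPMF_pos (k : ℕ) (θ : ℝ) (δ : ℕ → ℝ) (r : ℕ) : 0 < pcmPMF k θ δ r :=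
  div_pos (Real.exp_pos _) <|
    Finset.sum_pos (fun _ _ => Real.exp_pos _) Finset.nonempty_range_add_one

lemma pcmPMF_succ (k : ℕ) (θ : ℝ) (δ : ℕ → ℝ) (r : ℕ) :
    pcmPMF k θ δ (r + 1) = pcmPMF k θ δ r * Real.exp (θ - δ (r + 1)) := by
  rw [pcmPMF, pcmPMF, Finset.sum_Icc_succ_top (Nat.le_add_left 1 r), Real.exp_add,
    mul_div_right_comm]

lemma gcoord_eq_true_iff {k y r : ℕ} : gcoord k y r = true ↔ r ≤ k ∧ r ≤ y := by
  unfold gcoord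
  split_ifs <;> rw [decide_eq_true_iff] <;> omega

lemma gcoord_eq_true_of_le {k y r s : ℕ} (hrs : r ≤ s) (hs : gcoord k y s = true) :
    gcoord k y r = true :=
  have ⟨hsk, hsy⟩ := gcoord_eq_true_iff.mp hs
  gcoord_eq_true_iff.mpr ⟨hrs.trans hsk, hrs.trans hsy⟩

lemma filter_gcoord_eq_Ico {k b : ℕ} (a : ℕ) (hb : b ≤ k + 1) :
    (Finset.range (k + 1)).filter (fun y => gcoord k y a = true ∧ gcoord k y b = false) =
      Finset.Ico a b := by
  ext y
  rw [Finset.mem_filter, Finset.mem_range, Finset.mem_Ico, ← Bool.not_eq_true,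
    gcoord_eq_true_iff, gcoord_eq_true_iff]
  omega

lemma filter_gcoord_and_gcoord_eq_Ico {k a b c : ℕ} (hac : a ≤ c) (hb : b ≤ k + 1) :
    (Finset.range (k + 1)).filter
        (fun y => gcoord k y c = true ∧ gcoord k y a = true ∧ gcoord k y b = false) =
      Finset.Ico c b := by
  rw [← filter_gcoord_eq_Ico c hb]
  exact Finset.filter_congr fun y _ => and_congr_right fun hc =>
    and_iff_right (gcoord_eq_true_of_le hac hc)

/-- Proposition 4.4: if `p` follows the PCM and `μ` is the pushforward
of `p` under the Guttman embedding `G`, then for each `r = 1,…,k` the conditioning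
event `{G_{r-1} = 1, G_{r+1} = 0}` has positive probability and
`μ(G_r = 1 | G_{r-1} = 1, G_{r+1} = 0) = F(θ - δ r)`. -/
theorem pcm_pushforward_guttman_conditional_rasch
    (k : ℕ) (θ : ℝ) (δ : ℕ → ℝ) (p : ℕ → ℝ)
    (hpcm : ∀ r ≤ k, p r = pcmPMF k θ δ r) :
    ∀ r ∈ Finset.Icc 1 k,
      0 < (∑ y ∈ (Finset.range (k + 1)).filter
            (fun y => gcoord k y (r - 1) = true ∧ gcoord k y (r + 1) = false), p y) ∧
      (∑ y ∈ (Finset.range (k + 1)).filter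
            (fun y => gcoord k y r = true ∧ gcoord k y (r - 1) = true ∧
              gcoord k y (r + 1) = false), p y) /
        (∑ y ∈ (Finset.range (k + 1)).filter
            (fun y => gcoord k y (r - 1) = true ∧ gcoord k y (r + 1) = false), p y)
        = logistic (θ - δ r) := by
  intro r hr
  obtain ⟨hr_pos, hrk⟩ := Finset.mem_Icc.mp hr
  obtain ⟨n, rfl⟩ := Nat.exists_eq_add_of_le' hr_pos
  have hn_top : n + 1 + 1 ≤ k + 1 := Nat.succ_le_succ hrk
  have sum_Ico_eq : ∑ y ∈ Finset.Ico n (n + 1 + 1), p y =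
      pcmPMF k θ δ n + pcmPMF k θ δ (n + 1) := by
    rw [Finset.sum_Ico_succ_top n.le_succ, Nat.Ico_succ_singleton, Finset.sum_singleton,
      hpcm n (Nat.le_of_succ_le hrk), hpcm (n + 1) hrk]
  rw [Nat.add_sub_cancel, filter_gcoord_eq_Ico n hn_top,
    filter_gcoord_and_gcoord_eq_Ico n.le_succ hn_top, sum_Ico_eq, Nat.Ico_succ_singleton,
    Finset.sum_singleton, hpcm (n + 1) hrk]
  refine ⟨add_pos (pcmPMF_pos k θ δ n) (pcmPMF_pos k θ δ (n + 1)), ?_⟩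
  rw [pcmPMF_succ, ← logistic_eq_mul_exp_div_add (pcmPMF_pos k θ δ n).ne']
end

section
/- (Proposition 4.6.) Let F be the logistic function, θ ∈ ℝ, δ_1,…,δ_k ∈ ℝ, and set π̃_r = F(θ − δ_r) for r = 1,…,k. If p is the probability mass function of the partial credit model with parameters θ, δ_1,…,δ_k, then for every r = 0,…,k, p(r) = (∏_{j=1}^r π̃_j · ∏_{j=r+1}^k (1 − π̃_j)) / s̃, where s̃ = ∑_{s=0}^k ∏_{j=1}^s π̃_j ∏_{j=s+1}^k (1 − π̃_j) and empty products equal 1. -/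
open scoped Classical

theorem logistic_lt_one (x : ℝ) : logistic x < 1 :=
  logistic_eq_sigmoid x ▸ Real.sigmoid_lt_one x

theorem logistic_eq_exp_mul_one_sub_logistic (x : ℝ) :
    logistic x = Real.exp x * (1 - logistic x) := by
  have h := Real.sigmoid_mul_rexp_neg (-x)
  rw [neg_neg, Real.sigmoid_neg, ← logistic_eq_sigmoid] at h
  rw [mul_comm, h]

theorem prod_Icc_mul_prod_Icc_add_one {M : Type*} [CommMonoid M] (f : ℕ → M) {m r k : ℕ}
    (hmr : m ≤ r + 1) (hrk : r ≤ k) :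
    (∏ j ∈ Finset.Icc m r, f j) * ∏ j ∈ Finset.Icc (r + 1) k, f j =
      ∏ j ∈ Finset.Icc m k, f j := by
  simp only [← Finset.Ico_add_one_right_eq_Icc]
  exact Finset.prod_Ico_consecutive f hmr (Nat.add_le_add_right hrk 1)

theorem prod_Icc_mul_prod_Icc_add_one_of_eq_mul {M : Type*} [CommMonoid M] {f g w : ℕ → M}
    {m r k : ℕ} (hf : ∀ j ∈ Finset.Icc m r, f j = w j * g j) (hmr : m ≤ r + 1) (hrk : r ≤ k) :
    (∏ j ∈ Finset.Icc m r, f j) * ∏ j ∈ Finset.Icc (r + 1) k, g j =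
      (∏ j ∈ Finset.Icc m r, w j) * ∏ j ∈ Finset.Icc m k, g j := by
  rw [Finset.prod_congr rfl hf, Finset.prod_mul_distrib, mul_assoc,
    prod_Icc_mul_prod_Icc_add_one g hmr hrk]

theorem prod_Icc_mul_prod_Icc_add_one_div_sum_of_eq_mul {K : Type*} [Semifield K]
    {f g w : ℕ → K} {r k : ℕ} (hf : ∀ j ∈ Finset.Icc 1 k, f j = w j * g j)
    (hg : ∀ j ∈ Finset.Icc 1 k, g j ≠ 0) (hrk : r ≤ k) :
    ((∏ j ∈ Finset.Icc 1 r, f j) * ∏ j ∈ Finset.Icc (r + 1) k, g j) /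
        ∑ s ∈ Finset.range (k + 1),
          (∏ j ∈ Finset.Icc 1 s, f j) * ∏ j ∈ Finset.Icc (s + 1) k, g j =
      (∏ j ∈ Finset.Icc 1 r, w j) /
        ∑ s ∈ Finset.range (k + 1), ∏ j ∈ Finset.Icc 1 s, w j := by
  have hterm : ∀ s ≤ k, (∏ j ∈ Finset.Icc 1 s, f j) * ∏ j ∈ Finset.Icc (s + 1) k, g j =
      (∏ j ∈ Finset.Icc 1 s, w j) * ∏ j ∈ Finset.Icc 1 k, g j := fun s hs =>
    prod_Icc_mul_prod_Icc_add_one_of_eq_mul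
      (fun j hj => hf j (Finset.Icc_subset_Icc_right hs hj)) (Nat.le_add_left 1 s) hs
  have hsum : ∑ s ∈ Finset.range (k + 1),
        (∏ j ∈ Finset.Icc 1 s, f j) * ∏ j ∈ Finset.Icc (s + 1) k, g j =
      (∑ s ∈ Finset.range (k + 1), ∏ j ∈ Finset.Icc 1 s, w j) * ∏ j ∈ Finset.Icc 1 k, g j := by
    rw [Finset.sum_mul]
    exact Finset.sum_congr rfl fun s hs => hterm s (Finset.mem_range_succ_iff.mp hs)
  rw [hterm r hrk, hsum, mul_div_mul_right _ _ (Finset.prod_ne_zero_iff.mpr hg)]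

theorem pcmPMF_eq_prod_exp_div (k : ℕ) (θ : ℝ) (δ : ℕ → ℝ) (r : ℕ) :
    pcmPMF k θ δ r = (∏ j ∈ Finset.Icc 1 r, Real.exp (θ - δ j)) /
      ∑ s ∈ Finset.range (k + 1), ∏ j ∈ Finset.Icc 1 s, Real.exp (θ - δ j) := by
  simp only [pcmPMF, Real.exp_sum]

/-- Proposition 4.6: with `π̃ r = F(θ - δ r)`, the PCM probabilities
can be written as `p r = (∏_{j=1}^r π̃ j · ∏_{j=r+1}^k (1 - π̃ j)) / s̃`, where
`s̃ = ∑_{s=0}^k ∏_{j=1}^s π̃ j ∏_{j=s+1}^k (1 - π̃ j)`. -/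
theorem pcm_product_representation
    (k : ℕ) (θ : ℝ) (δ : ℕ → ℝ) (p : ℕ → ℝ)
    (hpcm : ∀ r ≤ k, p r = pcmPMF k θ δ r) :
    ∀ r ≤ k,
      p r = ((∏ j ∈ Finset.Icc 1 r, logistic (θ - δ j)) *
              ∏ j ∈ Finset.Icc (r + 1) k, (1 - logistic (θ - δ j))) /
            ∑ s ∈ Finset.range (k + 1),
              (∏ j ∈ Finset.Icc 1 s, logistic (θ - δ j)) *
                ∏ j ∈ Finset.Icc (s + 1) k, (1 - logistic (θ - δ j)) := by
  intro r hr
  rw [hpcm r hr, pcmPMF_eq_prod_exp_div]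
  exact (prod_Icc_mul_prod_Icc_add_one_div_sum_of_eq_mul
    (fun j _ => logistic_eq_exp_mul_one_sub_logistic (θ - δ j))
    (fun j _ => (sub_pos.mpr (logistic_lt_one (θ - δ j))).ne') hr).symm
end

section
/- If a probability mass function p on {0,1,…,k} follows the partial credit model with person parameter θ and item parameters δ_1,…,δ_k, then the reversed probability mass function q defined by q(r) = p(k − r) follows the partial credit model with person parameter −θ and item parameters δ'_1,…,δ'_k given by δ'_l = −δ_{k−l+1}. In particular, the partial credit model is invariant under the reverse permutation of the response categories. -/
open scoped Classical

/-! Reversing the categories turns the cumulative logits `x s = ∑ l ∈ Icc 1 s, (θ - δ l)` into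
`x (k - s) - x k`. The constant `x k` cancels against the normalisation, and the normalising sum
does not depend on the order in which the categories are listed. -/

/-- The softmax (Gibbs) weight of `i` for the logits `x`, normalised over the finite index set `s`.
It separates the normalisation in `pcmPMF` from the cumulative form of the logits. -/
noncomputable def softmax {ι : Type*} (s : Finset ι) (x : ι → ℝ) (i : ι) : ℝ :=
  Real.exp (x i) / ∑ j ∈ s, Real.exp (x j)

section Softmax

variable {ι : Type*} {s : Finset ι}

theorem softmax_congr {x y : ι → ℝ} (h : ∀ j ∈ s, x j = y j) {i : ι} (hi : i ∈ s) :
    softmax s x i = softmax s y i := by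
  have hsum : ∑ j ∈ s, Real.exp (x j) = ∑ j ∈ s, Real.exp (y j) :=
    Finset.sum_congr rfl fun j hj => congrArg Real.exp (h j hj)
  rw [softmax, softmax, h i hi, hsum]

theorem softmax_sub_const (x : ι → ℝ) (c : ℝ) (i : ι) :
    softmax s (fun j => x j - c) i = softmax s x i := by
  simp only [softmax, Real.exp_sub, ← Finset.sum_div]
  exact div_div_div_cancel_right₀ (Real.exp_ne_zero c) _ _

theorem softmax_range_reflect (k : ℕ) (x : ℕ → ℝ) (r : ℕ) :
    softmax (Finset.range (k + 1)) (fun j => x (k - j)) r =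
      softmax (Finset.range (k + 1)) x (k - r) :=
  congrArg (Real.exp (x (k - r)) / ·) (Finset.sum_flip fun j => Real.exp (x j))

end Softmax

theorem sum_Icc_one_reflect {M : Type*} [AddCommMonoid M] (a : ℕ → M) {k r : ℕ} (hr : r ≤ k) :
    ∑ l ∈ Finset.Icc 1 r, a (k - l + 1) = ∑ l ∈ Finset.Ioc (k - r) k, a l := by
  rw [← Finset.Ico_add_one_right_eq_Icc, ← Finset.Ico_add_one_add_one_eq_Ioc,
    ← Finset.sum_Ico_add' a (k - r) k 1,
    Finset.sum_Ico_reflect (fun j => a (j + 1)) 1 (Nat.add_le_add_right hr 1),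
    Nat.add_sub_add_right, Nat.add_sub_cancel]

theorem sum_Icc_one_add_sum_reflect {M : Type*} [AddCommMonoid M] (a : ℕ → M) {k r : ℕ}
    (hr : r ≤ k) :
    ∑ l ∈ Finset.Icc 1 (k - r), a l + ∑ l ∈ Finset.Icc 1 r, a (k - l + 1) =
      ∑ l ∈ Finset.Icc 1 k, a l := by
  rw [sum_Icc_one_reflect a hr]
  exact Finset.sum_Ioc_consecutive a (Nat.zero_le _) (Nat.sub_le k r)

/-- The cumulative logit of category `r` in the partial credit model: the logarithm of the
unnormalised weight of `r`, equal to `0` for the reference category `r = 0`. -/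
def pcmLogit (θ : ℝ) (δ : ℕ → ℝ) (r : ℕ) : ℝ :=
  ∑ l ∈ Finset.Icc 1 r, (θ - δ l)

theorem pcmPMF_eq_softmax (k : ℕ) (θ : ℝ) (δ : ℕ → ℝ) :
    pcmPMF k θ δ = softmax (Finset.range (k + 1)) (pcmLogit θ δ) :=
  rfl

theorem pcmLogit_neg_reflect (θ : ℝ) (δ : ℕ → ℝ) {k r : ℕ} (hr : r ≤ k) :
    pcmLogit (-θ) (fun l => -δ (k - l + 1)) r = pcmLogit θ δ (k - r) - pcmLogit θ δ k := by
  have hsplit : pcmLogit θ δ (k - r) + ∑ l ∈ Finset.Icc 1 r, (θ - δ (k - l + 1)) =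
      pcmLogit θ δ k :=
    sum_Icc_one_add_sum_reflect (fun l => θ - δ l) hr
  rw [← hsplit, sub_add_cancel_left, ← Finset.sum_neg_distrib]
  exact Finset.sum_congr rfl fun l _ => (neg_sub' θ (δ (k - l + 1))).symm

theorem pcmPMF_neg_reflect (θ : ℝ) (δ : ℕ → ℝ) {k r : ℕ} (hr : r ≤ k) :
    pcmPMF k (-θ) (fun l => -δ (k - l + 1)) r = pcmPMF k θ δ (k - r) := by
  simp only [pcmPMF_eq_softmax]
  calc
    softmax (Finset.range (k + 1)) (pcmLogit (-θ) fun l => -δ (k - l + 1)) r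
        = softmax (Finset.range (k + 1)) (fun s => pcmLogit θ δ (k - s) - pcmLogit θ δ k) r :=
      softmax_congr (fun _ hs => pcmLogit_neg_reflect θ δ (Finset.mem_range_succ_iff.mp hs))
        (Finset.mem_range_succ_iff.mpr hr)
    _ = softmax (Finset.range (k + 1)) (fun s => pcmLogit θ δ (k - s)) r :=
      softmax_sub_const _ _ _
    _ = softmax (Finset.range (k + 1)) (pcmLogit θ δ) (k - r) :=
      softmax_range_reflect k _ r

/-- if `p` follows the PCM with parameters `θ, δ 1, …, δ k`, then the
reversed pmf `q r = p (k - r)` follows the PCM with person parameter `-θ` and item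
parameters `δ' l = -δ (k - l + 1)`; i.e., the PCM is invariant under the reverse
permutation of the response categories. -/
theorem pcm_reverse_permutation_invariance
    (k : ℕ) (θ : ℝ) (δ : ℕ → ℝ) (p : ℕ → ℝ)
    (hpcm : ∀ r ≤ k, p r = pcmPMF k θ δ r) :
    ∀ r ≤ k, p (k - r) = pcmPMF k (-θ) (fun l => -δ (k - l + 1)) r := by
  intro r hr
  rw [hpcm (k - r) (Nat.sub_le k r), pcmPMF_neg_reflect θ δ hr]
end
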